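/- For every η > 0 there exists N₀ such that for all odd N = 2k + 1 ≥ N₀ the following holds. For b ∈ {0,1}, let D_b be the distribution on masked strings y ∈ {0,1,⋆}^N obtained by drawing X uniformly from the strings in {0,1}^N with exactly k + b ones and independently replacing each coordinate of X by ⋆ with probability N^(-1/5). Then the ℓ1 distance satisfies Σ_y |D_0(y) - D_1(y)| ≤ η. -/

import Mathlib

/-- The number of ones in a boolean string. -/
def wt {N : ℕ} (x : Fin N → Bool) : ℕ := (Finset.univ.filter fun i => x i = true).card

/-- The probability that masking `x` (independently replacing each coordinate by `⋆`
with probability `q` and keeping it with probability `1 - q`; `⋆` is modelled as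
`none`) produces the masked string `y ∈ {0,1,⋆}^N`. -/
def maskProb {N : ℕ} (q : ℝ) (x : Fin N → Bool) (y : Fin N → Option Bool) : ℝ :=
  ∏ i : Fin N,
    match y i with
    | none => q
    | some c => if c = x i then 1 - q else 0

/-!
Write `D` and `D'` for the laws obtained from the weights `k` and `k + 1`, let `s` and `a` be the
numbers of `⋆` and of visible ones in `y`, and put `p = (k + 1) / (N + 1)`. Flipping a hidden zero
into a hidden one matches the strings of weight `k` compatible with `y`, with a marked hidden zero,
to those of weight `k + 1` with a marked hidden one. This double count gives the likelihood ratio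
`p * (1 - p) * (s + 1) * (D y - D' y) = (p * D y + (1 - p) * D' y) * e y` with
`e y = k + 1 - a - p * (s + 1)`. Given the original string, `e` and `s - N * q` are, up to a bounded
shift of `e`, sums of independent centered variables, so both have size `O(√(N * q))` on average.
As `s` is about `N * q`, the ℓ1 distance is `O(1 / √(N * q))`. For `q = N ^ (-1 / 5)` this tends
to `0`.
-/

open Finset Filter Topology

section ProductWeights

variable {ι α R : Type*} [Fintype ι] [DecidableEq ι] [Fintype α] [CommSemiring R]
  {w : ι → α → R}

theorem sum_prod_mul_prod_mem (hw : ∀ i, ∑ a, w i a = 1) (f : ι → α → R) (s : Finset ι) :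
    ∑ y : ι → α, (∏ i, w i (y i)) * ∏ i ∈ s, f i (y i) = ∏ i ∈ s, ∑ a, w i a * f i a :=
  calc
    _ = ∑ y : ι → α, ∏ i, w i (y i) * (if i ∈ s then f i (y i) else 1) := by
      simp only [prod_mul_distrib, Fintype.prod_ite_mem]
    _ = ∏ i, ∑ a, w i a * (if i ∈ s then f i a else 1) :=
      (Fintype.prod_sum fun i a => w i a * (if i ∈ s then f i a else 1)).symm
    _ = ∏ i, if i ∈ s then ∑ a, w i a * f i a else 1 :=
      prod_congr rfl fun i _ => by split_ifs <;> simp [hw]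
    _ = _ := by simp

theorem sum_prod_mul_sum_sq_of_centered (hw : ∀ i, ∑ a, w i a = 1) {u : ι → α → R}
    (hu : ∀ i, ∑ a, w i a * u i a = 0) :
    ∑ y : ι → α, (∏ i, w i (y i)) * (∑ i, u i (y i)) ^ 2 = ∑ i, ∑ a, w i a * u i a ^ 2 := by
  have covariance (i j : ι) : ∑ y : ι → α, (∏ l, w l (y l)) * (u i (y i) * u j (y j)) =
      if i = j then ∑ a, w i a * u i a ^ 2 else 0 := by
    split_ifs with hij
    · subst hij
      simpa [← sq] using sum_prod_mul_prod_mem hw (fun l a => u l a ^ 2) {i}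
    · simpa [prod_pair hij, hu] using sum_prod_mul_prod_mem hw u {i, j}
  calc
    _ = ∑ y : ι → α, ∑ i, ∑ j, (∏ l, w l (y l)) * (u i (y i) * u j (y j)) := by
      simp only [sq, Fintype.sum_mul_sum]
      simp only [mul_sum]
    _ = ∑ i, ∑ j, ∑ y : ι → α, (∏ l, w l (y l)) * (u i (y i) * u j (y j)) := by
      rw [sum_comm]
      exact sum_congr rfl fun i _ => sum_comm
    _ = _ := by simp [covariance]

end ProductWeights

section Masking

variable {N : ℕ}

/-- The probability that masking a single bit `c` produces the symbol `o`: the factor of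
`maskProb` at one coordinate. -/
def maskWeight (q : ℝ) (c : Bool) (o : Option Bool) : ℝ :=
  match o with
  | none => q
  | some c' => if c' = c then 1 - q else 0

/-- The set of coordinates of the masked string `y` that carry `⋆`. -/
def unread (y : Fin N → Option Bool) : Finset (Fin N) := {i | y i = none}

/-- The number of visible ones of the masked string `y`. -/
def readOnes (y : Fin N → Option Bool) : ℕ := #{i | y i = some true}

theorem maskProb_eq_prod (q : ℝ) (x : Fin N → Bool) (y : Fin N → Option Bool) :
    maskProb q x y = ∏ i, maskWeight q (x i) (y i) := rfl

theorem sum_maskWeight (q : ℝ) (c : Bool) : ∑ o, maskWeight q c o = 1 := by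
  cases c <;> simp [maskWeight]

theorem maskWeight_nonneg {q : ℝ} (hq₀ : 0 ≤ q) (hq₁ : q ≤ 1) (c : Bool) (o : Option Bool) :
    0 ≤ maskWeight q c o := by
  unfold maskWeight
  split
  · exact hq₀
  · split_ifs
    · exact sub_nonneg.2 hq₁
    · exact le_rfl

theorem maskProb_nonneg {q : ℝ} (hq₀ : 0 ≤ q) (hq₁ : q ≤ 1) (x : Fin N → Bool)
    (y : Fin N → Option Bool) : 0 ≤ maskProb q x y :=
  prod_nonneg fun _ _ => maskWeight_nonneg hq₀ hq₁ _ _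

theorem sum_maskProb (q : ℝ) (x : Fin N → Bool) : ∑ y, maskProb q x y = 1 := by
  simpa [maskProb_eq_prod] using
    sum_prod_mul_prod_mem (fun i => sum_maskWeight q (x i)) (fun _ _ => 1) ∅

theorem eq_of_maskProb_ne_zero {q : ℝ} {x : Fin N → Bool} {y : Fin N → Option Bool}
    (h : maskProb q x y ≠ 0) {i : Fin N} {c : Bool} (hi : y i = some c) : x i = c := by
  have hweight : maskWeight q (x i) (y i) ≠ 0 := prod_ne_zero_iff.1 h i (mem_univ i)
  by_contra hne
  exact hweight (by simp [maskWeight, hi, Ne.symm hne])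

theorem maskProb_update_of_mem_unread (q : ℝ) (x : Fin N → Bool) {y : Fin N → Option Bool}
    {i : Fin N} (hi : i ∈ unread y) (c : Bool) :
    maskProb q (Function.update x i c) y = maskProb q x y := by
  refine prod_congr rfl fun j _ => ?_
  rcases eq_or_ne j i with rfl | hj
  · simp [(mem_filter.1 hi).2]
  · simp [hj]

theorem readOnes_add_card_unread_ones {q : ℝ} {x : Fin N → Bool} {y : Fin N → Option Bool}
    (h : maskProb q x y ≠ 0) : readOnes y + #{i ∈ unread y | x i = true} = wt x := by
  have hread : univ.filter (fun i => y i = some true) =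
      univ.filter fun i => x i = true ∧ y i ≠ none := by
    ext i
    rcases hy : y i with _ | c
    · simp [hy]
    · simp [hy, eq_of_maskProb_ne_zero h hy]
  have hunread : (unread y).filter (fun i => x i = true) =
      univ.filter fun i => x i = true ∧ y i = none := by
    ext i
    simp [unread, and_comm]
  rw [readOnes, hread, hunread, wt, add_comm, ← filter_filter, ← filter_filter,
    card_filter_add_card_filter_not]

theorem card_unread_zeros_add_wt {q : ℝ} {x : Fin N → Bool} {y : Fin N → Option Bool}
    (h : maskProb q x y ≠ 0) :
    #{i ∈ unread y | x i = false} + wt x = #(unread y) + readOnes y := by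
  have hsplit := card_filter_add_card_filter_not (s := unread y) (fun i => x i = true)
  simp only [Bool.not_eq_true] at hsplit
  have := readOnes_add_card_unread_ones h
  omega

theorem wt_update_true {x : Fin N → Bool} {i : Fin N} (hi : x i = false) :
    wt (Function.update x i true) = wt x + 1 := by
  have hins : univ.filter (fun j => Function.update x i true j = true) =
      insert i (univ.filter fun j => x j = true) := by
    ext j
    rcases eq_or_ne j i with rfl | hj <;> simp [*]
  rw [wt, wt, hins, card_insert_of_notMem (by simp [hi])]

theorem card_filter_wt_eq (N r : ℕ) : #{x : Fin N → Bool | wt x = r} = N.choose r := by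
  rw [← Finset.card_fin N, ← card_powersetCard, Finset.card_fin]
  refine card_nbij' (fun x => univ.filter fun i => x i = true) (fun s i => decide (i ∈ s))
    ?_ ?_ ?_ ?_
  · exact fun x hx => mem_powersetCard.2 ⟨subset_univ _, (mem_filter.1 hx).2⟩
  · intro s hs
    refine mem_filter.2 ⟨mem_univ _, ?_⟩
    simpa [wt] using (mem_powersetCard.1 hs).2
  · intro x _
    simp
  · intro s _
    simp

theorem sum_maskProb_flip (q : ℝ) {y : Fin N → Option Bool} {i : Fin N} (hi : i ∈ unread y)
    (k : ℕ) :
    ∑ x with wt x = k ∧ x i = false, maskProb q x y =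
      ∑ x with wt x = k + 1 ∧ x i = true, maskProb q x y := by
  refine sum_nbij' (fun x => Function.update x i true) (fun x => Function.update x i false)
    ?_ ?_ ?_ ?_ fun x _ => (maskProb_update_of_mem_unread q x hi true).symm
  · intro x hx
    obtain ⟨hwt, hxi⟩ := (mem_filter.1 hx).2
    simp [wt_update_true hxi, hwt]
  · intro x hx
    obtain ⟨hwt, hxi⟩ := (mem_filter.1 hx).2
    have := wt_update_true (x := Function.update x i false) (i := i) (by simp)
    rw [Function.update_idem, ← hxi, Function.update_eq_self, hwt] at this
    simpa using this.symm
  · intro x hx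
    rw [Function.update_idem, ← (mem_filter.1 hx).2.2, Function.update_eq_self]
  · intro x hx
    rw [Function.update_idem, ← (mem_filter.1 hx).2.2, Function.update_eq_self]

theorem sum_card_unread_mul_maskProb (q : ℝ) (y : Fin N → Option Bool) (r : ℕ) (c : Bool) :
    ∑ x with wt x = r, (#{i ∈ unread y | x i = c} : ℝ) * maskProb q x y =
      ∑ i ∈ unread y, ∑ x with wt x = r ∧ x i = c, maskProb q x y := by
  simp_rw [← filter_filter, card_filter, Nat.cast_sum, sum_mul, sum_filter _ (maskProb q · y)]
  rw [sum_comm]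
  simp

theorem mul_sum_maskProb_succ (q : ℝ) (y : Fin N → Option Bool) (k : ℕ) :
    ((k : ℝ) + 1 - readOnes y) * ∑ x with wt x = k + 1, maskProb q x y =
      (#(unread y) + readOnes y - k) * ∑ x with wt x = k, maskProb q x y := by
  have hones : ∀ x ∈ ({x | wt x = k + 1} : Finset (Fin N → Bool)),
      ((k : ℝ) + 1 - readOnes y) * maskProb q x y =
        #{i ∈ unread y | x i = true} * maskProb q x y := by
    intro x hx
    by_cases h : maskProb q x y = 0
    · simp [h]
    have hcount := readOnes_add_card_unread_ones h
    rw [(mem_filter.1 hx).2] at hcount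
    rw [← Nat.cast_add_one, ← hcount]
    push_cast
    ring
  have hzeros : ∀ x ∈ ({x | wt x = k} : Finset (Fin N → Bool)),
      ((#(unread y) : ℝ) + readOnes y - k) * maskProb q x y =
        #{i ∈ unread y | x i = false} * maskProb q x y := by
    intro x hx
    by_cases h : maskProb q x y = 0
    · simp [h]
    have hcount := card_unread_zeros_add_wt h
    rw [(mem_filter.1 hx).2] at hcount
    rw [← Nat.cast_add, ← hcount]
    push_cast
    ring
  rw [mul_sum, mul_sum, sum_congr rfl hones, sum_congr rfl hzeros,
    sum_card_unread_mul_maskProb, sum_card_unread_mul_maskProb]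
  exact sum_congr rfl fun i hi => (sum_maskProb_flip q hi k).symm

theorem sum_maskProb_mul_sum_sq (q : ℝ) (x : Fin N → Bool) (t : Fin N → ℝ) :
    ∑ y, maskProb q x y * (∑ i, t i * ((if y i = none then 1 else 0) - q)) ^ 2 =
      q * (1 - q) * ∑ i, t i ^ 2 := by
  simp only [maskProb_eq_prod]
  rw [sum_prod_mul_sum_sq_of_centered (u := fun i o => t i * ((if o = none then 1 else 0) - q))
    fun i => sum_maskWeight q (x i), mul_sum]
  · refine sum_congr rfl fun i _ => ?_
    cases x i <;> simp [maskWeight] <;> ring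
  · intro i
    cases x i <;> simp [maskWeight] <;> ring

theorem sum_maskProb_mul_abs_sum_le {q : ℝ} (hq₀ : 0 ≤ q) (hq₁ : q ≤ 1) (x : Fin N → Bool)
    {t : Fin N → ℝ} (ht : ∀ i, |t i| ≤ 1) :
    ∑ y, maskProb q x y * |∑ i, t i * ((if y i = none then 1 else 0) - q)| ≤ √(N * q) := by
  refine Real.le_sqrt_of_sq_le ?_
  calc
    _ ≤ ∑ y, maskProb q x y * |∑ i, t i * ((if y i = none then 1 else 0) - q)| ^ 2 :=
      Real.pow_arith_mean_le_arith_mean_pow _ _ _ (fun y _ => maskProb_nonneg hq₀ hq₁ x y)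
        (sum_maskProb q x) (fun _ _ => abs_nonneg _) 2
    _ = q * (1 - q) * ∑ i, t i ^ 2 := by
      simp only [sq_abs, sum_maskProb_mul_sum_sq]
    _ ≤ q * 1 * ∑ _i : Fin N, 1 := by
      have := sub_nonneg.2 hq₁
      gcongr with i
      · linarith
      · exact (sq_le_one_iff_abs_le_one _).2 (ht i)
    _ = N * q := by simp [mul_comm]

/-- The distribution of the masking of a uniformly random string with exactly `r` ones; the `D_b` of
the paper is `maskedLaw q (k + b)`. For `r > N` it is `0`, the value of `0 / 0`. -/
noncomputable def maskedLaw (q : ℝ) (r : ℕ) (y : Fin N → Option Bool) : ℝ :=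
  (∑ x ∈ univ.filter fun x : Fin N → Bool => wt x = r, maskProb q x y) / (N.choose r : ℝ)

theorem maskedLaw_nonneg {q : ℝ} (hq₀ : 0 ≤ q) (hq₁ : q ≤ 1) (r : ℕ) (y : Fin N → Option Bool) :
    0 ≤ maskedLaw q r y :=
  div_nonneg (sum_nonneg fun x _ => maskProb_nonneg hq₀ hq₁ x y) (Nat.cast_nonneg _)

theorem sum_maskedLaw_mul_le {q : ℝ} {r : ℕ} (hr : r ≤ N) {f : (Fin N → Option Bool) → ℝ} {K : ℝ}
    (hf : ∀ x : Fin N → Bool, wt x = r → ∑ y, maskProb q x y * f y ≤ K) :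
    ∑ y, maskedLaw q r y * f y ≤ K := by
  have hchoose : (0 : ℝ) < N.choose r := by exact_mod_cast Nat.choose_pos hr
  calc
    ∑ y, maskedLaw q r y * f y =
        (∑ x : Fin N → Bool with wt x = r, ∑ y, maskProb q x y * f y) / N.choose r := by
      rw [sum_comm, sum_div]
      simp only [maskedLaw, ← sum_mul]
      exact sum_congr rfl fun y _ => div_mul_eq_mul_div _ _ _
    _ ≤ (#{x : Fin N → Bool | wt x = r} • K) / N.choose r := by
      gcongr
      exact sum_le_card_nsmul _ _ _ fun x hx => hf x (mem_filter.1 hx).2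
    _ = K := by
      rw [card_filter_wt_eq, nsmul_eq_mul, mul_div_cancel_left₀ _ hchoose.ne']

/-- The ratio `p = (k + 1) / (N + 1)` comparing the weights `k` and `k + 1`. The shifts by one make
`(N + 1) * p = k + 1` and `(N + 1) * (1 - p) = N - k` the two factors in the recurrence between
`N.choose k` and `N.choose (k + 1)`. -/
noncomputable def onesRatio (N k : ℕ) : ℝ := (k + 1) / (N + 1)

/-- The excess over `p * (s + 1)`, with `p = onesRatio N k` and `s` the number of `⋆` in `y`, of
the number of ones that are hidden in `y` if the original string has weight `k + 1`. It determines
the likelihood ratio of the two laws at `y`. -/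
noncomputable def hiddenExcess (k : ℕ) (y : Fin N → Option Bool) : ℝ :=
  k + 1 - readOnes y - onesRatio N k * (#(unread y) + 1)

theorem onesRatio_mul (N k : ℕ) : onesRatio N k * (N + 1) = k + 1 :=
  div_mul_cancel₀ _ (by positivity)

theorem onesRatio_nonneg (N k : ℕ) : 0 ≤ onesRatio N k := by
  unfold onesRatio
  positivity

theorem onesRatio_le_one {k : ℕ} (hk : k ≤ N) : onesRatio N k ≤ 1 :=
  div_le_one_of_le₀ (by gcongr) (by positivity)

theorem maskedLaw_succ_mul {k : ℕ} (hk : k < N) (q : ℝ) (y : Fin N → Option Bool) :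
    (k + 1 - readOnes y) * (1 - onesRatio N k) * maskedLaw q (k + 1) y =
      (#(unread y) + readOnes y - k) * onesRatio N k * maskedLaw q k y := by
  have hflip := mul_sum_maskProb_succ q y k
  have hp := onesRatio_mul N k
  have hchoose : (N.choose (k + 1) : ℝ) * (k + 1) = N.choose k * (N - k) := by
    rw [← Nat.cast_sub hk.le]
    exact_mod_cast Nat.choose_succ_right_eq N k
  have hpos₀ : (0 : ℝ) < N.choose k := by exact_mod_cast Nat.choose_pos hk.le
  have hpos₁ : (0 : ℝ) < N.choose (k + 1) := by exact_mod_cast Nat.choose_pos hk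
  have hchoose' : (N.choose (k + 1) : ℝ) * onesRatio N k =
      N.choose k * (1 - onesRatio N k) := by
    have hN : (N : ℝ) + 1 ≠ 0 := by positivity
    apply mul_right_cancel₀ hN
    linear_combination hchoose + (N.choose (k + 1) + N.choose k : ℝ) * hp
  unfold maskedLaw
  rw [mul_div_assoc', mul_div_assoc', div_eq_div_iff hpos₁.ne' hpos₀.ne']
  linear_combination (N.choose k * (1 - onesRatio N k) : ℝ) * hflip -
    (#(unread y) + readOnes y - k : ℝ) * (∑ x with wt x = k, maskProb q x y) * hchoose'

theorem maskedLaw_sub_mul {k : ℕ} (hk : k < N) (q : ℝ) (y : Fin N → Option Bool) :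
    onesRatio N k * (1 - onesRatio N k) * (#(unread y) + 1) *
        (maskedLaw q k y - maskedLaw q (k + 1) y) =
      (onesRatio N k * maskedLaw q k y + (1 - onesRatio N k) * maskedLaw q (k + 1) y) *
        hiddenExcess k y := by
  unfold hiddenExcess
  linear_combination -maskedLaw_succ_mul hk q y

theorem mul_one_sub_mul_abs_sub_le {p A B : ℝ} (hp₀ : 0 ≤ p) (hp₁ : 0 ≤ 1 - p) (hA : 0 ≤ A)
    (hB : 0 ≤ B) : p * (1 - p) * |A - B| ≤ p * A + (1 - p) * B :=
  calc
    p * (1 - p) * |A - B| ≤ p * (1 - p) * (A + B) := by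
      gcongr
      exact abs_le.2 ⟨by linarith, by linarith⟩
    _ = p * A + (1 - p) * B - (p ^ 2 * A + (1 - p) ^ 2 * B) := by ring
    _ ≤ p * A + (1 - p) * B := sub_le_self _ (by positivity)

theorem mul_abs_maskedLaw_sub_le {k : ℕ} (hk : k < N) {q : ℝ} (hq₀ : 0 ≤ q) (hq₁ : q ≤ 1) (m : ℝ)
    (y : Fin N → Option Bool) :
    onesRatio N k * (1 - onesRatio N k) * m * |maskedLaw q k y - maskedLaw q (k + 1) y| ≤
      (onesRatio N k * maskedLaw q k y + (1 - onesRatio N k) * maskedLaw q (k + 1) y) *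
        (|hiddenExcess k y| + |#(unread y) - m|) := by
  have hdiff := congrArg abs (maskedLaw_sub_mul hk q y)
  have hA := maskedLaw_nonneg hq₀ hq₁ k y
  have hB := maskedLaw_nonneg hq₀ hq₁ (k + 1) y
  have hp₀ := onesRatio_nonneg N k
  have hp₁ : 0 ≤ 1 - onesRatio N k := sub_nonneg.2 (onesRatio_le_one hk.le)
  set p := onesRatio N k
  set A := maskedLaw q k y
  set B := maskedLaw q (k + 1) y
  set s : ℝ := (#(unread y) : ℝ)
  have hs : 0 ≤ s + 1 := by positivity
  have hmix : 0 ≤ p * A + (1 - p) * B := by positivity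
  have hratio : p * (1 - p) * (s + 1) * |A - B| = (p * A + (1 - p) * B) * |hiddenExcess k y| := by
    simpa only [abs_mul, abs_of_nonneg hp₀, abs_of_nonneg hp₁, abs_of_nonneg hs,
      abs_of_nonneg hmix] using hdiff
  -- The bound `m ≤ (s + 1) + |s - m|` avoids dividing by the random factor `s + 1`.
  calc
    p * (1 - p) * m * |A - B| ≤ p * (1 - p) * ((s + 1) + |s - m|) * |A - B| := by
      gcongr
      linarith [neg_abs_le (s - m)]
    _ = p * (1 - p) * (s + 1) * |A - B| + p * (1 - p) * |A - B| * |s - m| := by ring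
    _ ≤ (p * A + (1 - p) * B) * |hiddenExcess k y| + (p * A + (1 - p) * B) * |s - m| := by
      rw [hratio]
      gcongr
      exact mul_one_sub_mul_abs_sub_le hp₀ hp₁ hA hB
    _ = _ := by ring

theorem card_unread_sub (q : ℝ) (y : Fin N → Option Bool) :
    (#(unread y) : ℝ) - N * q = ∑ i, 1 * ((if y i = none then 1 else 0) - q) := by
  simp [unread]

theorem hiddenExcess_eq {q : ℝ} {x : Fin N → Bool} {y : Fin N → Option Bool}
    (h : maskProb q x y ≠ 0) (k : ℕ) :
    hiddenExcess k y = (1 - q) * (k + 1 - onesRatio N k - wt x) +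
      ∑ i, ((if x i = true then 1 else 0) - onesRatio N k) *
        ((if y i = none then 1 else 0) - q) := by
  have hones : (readOnes y : ℝ) + #{i ∈ unread y | x i = true} = wt x := by
    exact_mod_cast readOnes_add_card_unread_ones h
  have hhidden : (#{i ∈ unread y | x i = true} : ℝ) =
      ∑ i, (if x i = true then 1 else 0) * (if y i = none then 1 else 0) := by
    simp [unread, filter_filter, ← ite_and, and_comm]
  have hwt : (wt x : ℝ) = ∑ i, if x i = true then 1 else 0 := by simp [wt]
  have hunread : (#(unread y) : ℝ) = ∑ i, if y i = none then 1 else 0 := by simp [unread]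
  have hsum : ∑ i, ((if x i = true then 1 else 0) - onesRatio N k) *
      ((if y i = none then 1 else 0) - q) = #{i ∈ unread y | x i = true} - q * wt x -
        onesRatio N k * #(unread y) + N * (onesRatio N k * q) := by
    rw [hhidden, hwt, hunread]
    simp only [sub_mul, mul_sub, sum_sub_distrib, ← mul_sum, ← sum_mul, sum_const, card_univ,
      Fintype.card_fin, nsmul_eq_mul]
    ring
  rw [hsum, hiddenExcess]
  linear_combination -hones - q * onesRatio_mul N k

theorem sum_maskProb_mul_abs_hiddenExcess_le {q : ℝ} (hq₀ : 0 ≤ q) (hq₁ : q ≤ 1) {k : ℕ}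
    (hk : k ≤ N) {x : Fin N → Bool} (hx : wt x = k ∨ wt x = k + 1) :
    ∑ y, maskProb q x y * |hiddenExcess k y| ≤ 1 + √(N * q) := by
  have hp₀ := onesRatio_nonneg N k
  have hp₁ := onesRatio_le_one hk
  have hmean : |(1 - q) * (k + 1 - onesRatio N k - wt x)| ≤ 1 := by
    rw [abs_mul]
    refine mul_le_one₀ ?_ (abs_nonneg _) ?_ <;> rw [abs_le]
    · constructor <;> linarith
    · rcases hx with hx | hx <;> rw [hx] <;> push_cast <;> constructor <;> linarith
  set Z : (Fin N → Option Bool) → ℝ := fun y => ∑ i,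
    ((if x i = true then 1 else 0) - onesRatio N k) * ((if y i = none then 1 else 0) - q)
  have hle (y : Fin N → Option Bool) :
      maskProb q x y * |hiddenExcess k y| ≤ maskProb q x y + maskProb q x y * |Z y| := by
    by_cases h : maskProb q x y = 0
    · simp [h]
    rw [hiddenExcess_eq h, ← mul_one_add]
    have := maskProb_nonneg hq₀ hq₁ x y
    gcongr
    exact (abs_add_le _ _).trans (add_le_add_left hmean _)
  calc
    _ ≤ ∑ y, maskProb q x y + ∑ y, maskProb q x y * |Z y| := by
      rw [← sum_add_distrib]
      exact sum_le_sum fun y _ => hle y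
    _ ≤ 1 + √(N * q) := by
      rw [sum_maskProb]
      gcongr
      refine sum_maskProb_mul_abs_sum_le hq₀ hq₁ x fun i => ?_
      rw [abs_le]
      split_ifs <;> constructor <;> linarith

theorem sum_maskedLaw_mul_abs_hiddenExcess_add_le {q : ℝ} (hq₀ : 0 ≤ q) (hq₁ : q ≤ 1) {k r : ℕ}
    (hk : k < N) (hr : r = k ∨ r = k + 1) :
    ∑ y : Fin N → Option Bool,
      maskedLaw q r y * (|hiddenExcess k y| + |#(unread y) - N * q|) ≤ 1 + 2 * √(N * q) := by
  refine sum_maskedLaw_mul_le (by omega) fun x hx => ?_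
  have hexcess := sum_maskProb_mul_abs_hiddenExcess_le hq₀ hq₁ hk.le (hx ▸ hr)
  have hunread : ∑ y, maskProb q x y * |#(unread y) - N * q| ≤ √(N * q) := by
    simp only [card_unread_sub]
    exact sum_maskProb_mul_abs_sum_le hq₀ hq₁ x fun _ => abs_one.le
  simp only [mul_add, sum_add_distrib]
  linarith

theorem l1_maskedLaw_sub_mul_le {q : ℝ} (hq₀ : 0 ≤ q) (hq₁ : q ≤ 1) {k : ℕ} (hk : k < N) :
    onesRatio N k * (1 - onesRatio N k) * (N * q) *
      ∑ y : Fin N → Option Bool, |maskedLaw q k y - maskedLaw q (k + 1) y| ≤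
        1 + 2 * √(N * q) := by
  have hp₀ := onesRatio_nonneg N k
  have hp₁ : 0 ≤ 1 - onesRatio N k := sub_nonneg.2 (onesRatio_le_one hk.le)
  set p := onesRatio N k
  set F : (Fin N → Option Bool) → ℝ := fun y => |hiddenExcess k y| + |#(unread y) - N * q|
  calc
    _ ≤ ∑ y, (p * maskedLaw q k y + (1 - p) * maskedLaw q (k + 1) y) * F y := by
      rw [mul_sum]
      exact sum_le_sum fun y _ => mul_abs_maskedLaw_sub_le hk hq₀ hq₁ (N * q) y
    _ = p * ∑ y, maskedLaw q k y * F y + (1 - p) * ∑ y, maskedLaw q (k + 1) y * F y := by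
      simp only [add_mul, mul_assoc, sum_add_distrib, mul_sum]
    _ ≤ p * (1 + 2 * √(N * q)) + (1 - p) * (1 + 2 * √(N * q)) := by
      gcongr
      · exact sum_maskedLaw_mul_abs_hiddenExcess_add_le hq₀ hq₁ hk (.inl rfl)
      · exact sum_maskedLaw_mul_abs_hiddenExcess_add_le hq₀ hq₁ hk (.inr rfl)
    _ = 1 + 2 * √(N * q) := by ring

theorem l1_maskedLaw_sub_le {q δ : ℝ} {k : ℕ} (hδ : 0 < δ) (hones : δ * (N + 1) ≤ k + 1)
    (hzeros : δ * (N + 1) ≤ N - k) (hq₁ : q ≤ 1) (hNq : 1 ≤ N * q) :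
    ∑ y : Fin N → Option Bool, |maskedLaw q k y - maskedLaw q (k + 1) y| ≤
      3 / (δ ^ 2 * √(N * q)) := by
  have hN : (0 : ℝ) < N + 1 := by positivity
  have hq₀ : 0 ≤ q := (pos_of_mul_pos_right (one_pos.trans_le hNq) N.cast_nonneg).le
  have hk : k < N := by
    have : (0 : ℝ) < N - k := (mul_pos hδ hN).trans_le hzeros
    exact_mod_cast sub_pos.1 this
  have hp : δ ≤ onesRatio N k := (le_div_iff₀ hN).2 hones
  have hp' : δ ≤ 1 - onesRatio N k := by
    refine le_of_mul_le_mul_right ?_ hN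
    linarith [onesRatio_mul N k]
  have hsqrt : 1 ≤ √(N * q) := Real.one_le_sqrt.2 hNq
  have hsq : √(N * q) ^ 2 = N * q := Real.sq_sqrt (by linarith)
  have hbound := l1_maskedLaw_sub_mul_le hq₀ hq₁ hk
  set L := ∑ y : Fin N → Option Bool, |maskedLaw q k y - maskedLaw q (k + 1) y|
  have : 0 ≤ L := sum_nonneg fun _ _ => abs_nonneg _
  rw [le_div_iff₀ (by positivity)]
  refine le_of_mul_le_mul_right ?_ (one_pos.trans_le hsqrt)
  calc
    L * (δ ^ 2 * √(N * q)) * √(N * q) = δ * δ * (N * q) * L := by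
      linear_combination (L * δ ^ 2) * hsq
    _ ≤ onesRatio N k * (1 - onesRatio N k) * (N * q) * L := by
      gcongr
      exact hδ.le.trans hp
    _ ≤ 1 + 2 * √(N * q) := hbound
    _ ≤ 3 * √(N * q) := by linarith

end Masking

theorem tendsto_natCast_mul_rpow_neg_atTop {α : ℝ} (hα : α < 1) :
    Tendsto (fun N : ℕ => (N : ℝ) * (N : ℝ) ^ (-α)) atTop atTop := by
  refine ((tendsto_rpow_atTop (sub_pos.2 hα)).comp tendsto_natCast_atTop_atTop).congr' ?_
  filter_upwards [eventually_gt_atTop 0] with N hN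
  have hN' : (0 : ℝ) < N := Nat.cast_pos.2 hN
  simp [sub_eq_add_neg, Real.rpow_add hN']

theorem l1_distance_masked_weights_small_general {q : ℕ → ℝ} {δ : ℝ} (hδ : 0 < δ)
    (hq : ∀ᶠ N in atTop, q N ≤ 1) (hNq : Tendsto (fun N : ℕ => N * q N) atTop atTop) :
    ∀ η : ℝ, 0 < η → ∃ N₀ : ℕ, ∀ N k : ℕ,
      δ * (N + 1) ≤ k + 1 → δ * (N + 1) ≤ N - k → N₀ ≤ N →
        ∑ y : Fin N → Option Bool, |maskedLaw (q N) k y - maskedLaw (q N) (k + 1) y| ≤ η := by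
  intro η hη
  have hsmall : Tendsto (fun N : ℕ => 3 / (δ ^ 2 * √(N * q N))) atTop (𝓝 0) :=
    ((Real.tendsto_sqrt_atTop.comp hNq).const_mul_atTop (by positivity)).const_div_atTop 3
  obtain ⟨N₀, hN₀⟩ := eventually_atTop.1
    ((hsmall.eventually_le_const hη).and (hq.and (hNq.eventually_ge_atTop 1)))
  refine ⟨N₀, fun N k hones hzeros hN => ?_⟩
  obtain ⟨hle, hq₁, hNq₁⟩ := hN₀ N hN
  exact (l1_maskedLaw_sub_le hδ hones hzeros hq₁ hNq₁).trans hle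

/-- For every `η > 0` there is `N₀` such that for all odd `N = 2k + 1 ≥ N₀`:
if `D_b` (for `b ∈ {0,1}`) is the distribution on masked strings `y ∈ {0,1,⋆}^N`
obtained by drawing `X` uniformly from the strings with exactly `k + b` ones and
independently replacing each coordinate by `⋆` with probability `N^(-1/5)`, then
`∑_y |D_0(y) - D_1(y)| ≤ η`. -/
theorem l1_distance_masked_weights_small :
    ∀ η : ℝ, 0 < η → ∃ N₀ : ℕ, ∀ N k : ℕ, N = 2 * k + 1 → N₀ ≤ N →
      ∑ y : Fin N → Option Bool,
        |(∑ x ∈ Finset.univ.filter fun x : Fin N → Bool => wt x = k,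
              maskProb ((N : ℝ) ^ (-(1 / 5) : ℝ)) x y) / (N.choose k : ℝ) -
          (∑ x ∈ Finset.univ.filter fun x : Fin N → Bool => wt x = k + 1,
              maskProb ((N : ℝ) ^ (-(1 / 5) : ℝ)) x y) / (N.choose (k + 1) : ℝ)| ≤
        η := by
  intro η hη
  have hq : ∀ᶠ N : ℕ in atTop, (N : ℝ) ^ (-(1 / 5) : ℝ) ≤ 1 := by
    filter_upwards [eventually_ge_atTop 1] with N hN
    exact Real.rpow_le_one_of_one_le_of_nonpos (Nat.one_le_cast.2 hN) (by norm_num)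
  obtain ⟨N₀, hN₀⟩ := l1_distance_masked_weights_small_general (δ := 1 / 2) (by norm_num) hq
    (tendsto_natCast_mul_rpow_neg_atTop (by norm_num)) η hη
  refine ⟨N₀, fun N k hN hle => hN₀ N k ?_ ?_ hle⟩ <;> rw [hN] <;> push_cast <;> linarith
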